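/- arXiv:2212.11540 — 6 statements merged into one kernel-verified Lean document; each statement's English description precedes it below -/
import Mathlib

section
/- Let T > 0, 0 <= a < b < T, gamma >= 0, kappa1 >= 0, kappa1' >= 0, and define phi1(t) = (kappa1/t + kappa1') * exp(-gamma*t) for t > 0. Then 0 <= ∫_a^b (b - s) * phi1(T-s) ds <= exp(-gamma*(T-b)) * ( kappa1 * ( (b-a) - (T-b) * log(1 + (b-a)/(T-b)) ) + kappa1' * (b-a)^2 / 2 ). -/
open MeasureTheory

/-- Equation (7) of the paper: the bound for `∫_a^b (b-s) φ₁(T-s) ds` with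
`φ₁(t) = (κ₁/t + κ₁') e^{-γ t}`, producing the coefficient `ρ_j` of
Theorem 2 (backward Euler). -/
theorem green_phi1_weighted_integral_bound
    (T a b γ κ₁ κ₁' : ℝ)
    (hT : 0 < T) (ha : 0 ≤ a) (hab : a < b) (hbT : b < T)
    (hγ : 0 ≤ γ) (hκ₁ : 0 ≤ κ₁) (hκ₁' : 0 ≤ κ₁') :
    0 ≤ (∫ s in a..b, (b - s) * ((κ₁ / (T - s) + κ₁') * Real.exp (-γ * (T - s)))) ∧
      (∫ s in a..b, (b - s) * ((κ₁ / (T - s) + κ₁') * Real.exp (-γ * (T - s)))) ≤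
        Real.exp (-γ * (T - b)) *
          (κ₁ * ((b - a) - (T - b) * Real.log (1 + (b - a) / (T - b)))
            + κ₁' * (b - a) ^ 2 / 2) := by
  have hpos : ∀ s ∈ Set.Icc a b, 0 < T - s := fun s hs => by linarith [hs.2]
  have hu : Set.uIcc a b = Set.Icc a b := Set.uIcc_of_le hab.le
  have hc1 : ContinuousOn (fun s => (b - s) * (κ₁ / (T - s) + κ₁')) (Set.Icc a b) := by
    have hd : ContinuousOn (fun s => κ₁ / (T - s)) (Set.Icc a b) :=
      ContinuousOn.div (by fun_prop) (by fun_prop) (fun s hs => (hpos s hs).ne')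
    fun_prop
  have hc2 : ContinuousOn
      (fun s => (b - s) * ((κ₁ / (T - s) + κ₁') * Real.exp (-γ * (T - s)))) (Set.Icc a b) := by
    have hd : ContinuousOn (fun s => κ₁ / (T - s)) (Set.Icc a b) :=
      ContinuousOn.div (by fun_prop) (by fun_prop) (fun s hs => (hpos s hs).ne')
    fun_prop
  have hi1 := (hu ▸ hc1).intervalIntegrable (μ := volume)
  have hi2 := (hu ▸ hc2).intervalIntegrable (μ := volume)
  have hnn : ∀ s ∈ Set.Icc a b, 0 ≤ (b - s) * (κ₁ / (T - s) + κ₁') := fun s hs =>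
    mul_nonneg (by linarith [hs.2]) (add_nonneg (div_nonneg hκ₁ (hpos s hs).le) hκ₁')
  have hval : (∫ s in a..b, (b - s) * (κ₁ / (T - s) + κ₁')) =
      κ₁ * ((b - a) - (T - b) * Real.log (1 + (b - a) / (T - b))) + κ₁' * (b - a) ^ 2 / 2 := by
    have hder : ∀ s ∈ Set.uIcc a b,
        HasDerivAt (fun s => κ₁ * (s + (T - b) * Real.log (T - s)) - κ₁' * (b - s) ^ 2 / 2)
          ((b - s) * (κ₁ / (T - s) + κ₁')) s := by
      intro s hs
      rw [hu] at hs
      have h0 := (hpos s hs).ne'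
      have h1 := ((hasDerivAt_id s).const_sub T).log h0
      have h2 := ((((hasDerivAt_id s).add (h1.const_mul (T - b))).const_mul κ₁).sub
        (((((hasDerivAt_id s).const_sub b).pow 2).const_mul κ₁').div_const 2))
      have hE : (b - s) * (κ₁ / (T - s) + κ₁') = κ₁ * (1 + (T - b) * (-1 / (T - id s)))
          - κ₁' * (((2 : ℕ) : ℝ) * (b - id s) ^ (2 - 1) * -1) / 2 := by
        simp only [id]
        field_simp
        push_cast
        ring
      rw [hE]
      exact h2
    rw [intervalIntegral.integral_eq_sub_of_hasDerivAt hder hi1]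
    have hTb : 0 < T - b := by linarith
    have hTa : 0 < T - a := by linarith
    have e : 1 + (b - a) / (T - b) = (T - a) / (T - b) := by
      field_simp
      ring
    rw [e, Real.log_div hTa.ne' hTb.ne']
    ring
  constructor
  · apply intervalIntegral.integral_nonneg hab.le
    intro s hs
    rw [← mul_assoc]
    exact mul_nonneg (hnn s hs) (Real.exp_pos _).le
  · rw [← hval, ← intervalIntegral.integral_const_mul]
    apply intervalIntegral.integral_mono_on hab.le hi2 (hi1.const_mul _)
    intro s hs
    rw [← mul_assoc, mul_comm (Real.exp _)]
    apply mul_le_mul_of_nonneg_left _ (hnn s hs)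
    apply Real.exp_le_exp.mpr
    nlinarith [mul_nonneg hγ (sub_nonneg.mpr hs.2)]
end

section
/- Let T > 0, 0 <= a < b < T with b - a < T - b, and let k be a natural number. Then ∫_a^b (b - s)^k * (s - a)/(T - s) ds = (b - a)^{k+1} * SUM_{l=1}^{infinity} ( (-1)^{l+1} / ((l+k)*(l+k+1)) ) * ( (b-a)/(T-b) )^l, where the series on the right converges absolutely since (b-a)/(T-b) < 1. -/
open MeasureTheory

lemma beta_int (a b : ℝ) (n : ℕ) :
    (∫ s in a..b, (b - s) ^ n * (s - a)) =
      (b - a) ^ (n + 2) / (((n : ℝ) + 1) * ((n : ℝ) + 2)) := by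
  have h1 : (∫ s in a..b, (b - s) ^ n * (s - a))
      = ∫ u in (b - b)..(b - a), ((b - a) * u ^ n - u ^ (n + 1)) := by
    rw [← intervalIntegral.integral_comp_sub_left
      (fun u : ℝ => (b - a) * u ^ n - u ^ (n + 1)) b]
    congr 1
    ext s
    ring
  rw [h1, intervalIntegral.integral_sub, intervalIntegral.integral_const_mul, integral_pow,
    integral_pow]
  · have : (n : ℝ) + 1 ≠ 0 := by positivity
    have : (n : ℝ) + 2 ≠ 0 := by positivity
    have : (n : ℝ) + 1 + 1 ≠ 0 := by positivity
    simp only [sub_self]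
    push_cast
    rw [zero_pow (by omega), zero_pow (by omega)]
    field_simp
    ring
  · exact Continuous.intervalIntegrable (by fun_prop) _ _
  · exact Continuous.intervalIntegrable (by fun_prop) _ _

/-- Series expansion of the moment integrals `μ_{k,j}` of the paper:
`μ_k = (b-a)^{k+1} ∑_{l=1}^∞ (-1)^{l+1}/((l+k)(l+k+1)) ((b-a)/(T-b))^l`
(written below with the summation index shifted, `l = m+1`), the series being
absolutely convergent since `(b-a)/(T-b) < 1`. -/
theorem moment_integral_series
    (T a b : ℝ) (hT : 0 < T) (ha : 0 ≤ a) (hab : a < b) (hbT : b < T)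
    (hratio : b - a < T - b) (k : ℕ) :
    Summable (fun m : ℕ =>
        |((-1 : ℝ) ^ m / (((m : ℝ) + k + 1) * ((m : ℝ) + k + 2)))
          * ((b - a) / (T - b)) ^ (m + 1)|) ∧
      (∫ s in a..b, (b - s) ^ k * (s - a) / (T - s)) =
        (b - a) ^ (k + 1) *
          ∑' m : ℕ, ((-1 : ℝ) ^ m / (((m : ℝ) + k + 1) * ((m : ℝ) + k + 2)))
            * ((b - a) / (T - b)) ^ (m + 1) := by
  have hD : 0 < T - b := by linarith
  have hh : 0 < b - a := by linarith
  have hr0 : 0 ≤ (b - a) / (T - b) := by positivity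
  have hr1 : (b - a) / (T - b) < 1 := (div_lt_one hD).2 hratio
  have hgeo := summable_geometric_of_lt_one hr0 hr1
  constructor
  · refine Summable.of_nonneg_of_le (fun _ => abs_nonneg _) (fun m => ?_)
      (hgeo.mul_right ((b - a) / (T - b)))
    rw [← pow_succ, abs_mul, abs_of_nonneg (pow_nonneg hr0 (m + 1))]
    refine mul_le_of_le_one_left (pow_nonneg hr0 _) ?_
    rw [abs_div, abs_pow, abs_neg, abs_one, one_pow, abs_of_nonneg (by positivity)]
    apply div_le_one_of_le₀ _ (by positivity)
    have h1 : (0 : ℝ) ≤ m := by positivity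
    have h2 : (0 : ℝ) ≤ k := by positivity
    nlinarith
  · have key : HasSum (fun m : ℕ => ∫ s in a..b,
        ((-1 : ℝ) ^ m / (T - b) ^ (m + 1)) * ((b - s) ^ (m + k) * (s - a)))
        (∫ s in a..b, (b - s) ^ k * (s - a) / (T - s)) := by
      apply intervalIntegral.hasSum_integral_of_dominated_convergence
        (fun m _ => ((b - a) / (T - b)) ^ m * ((b - a) ^ (k + 1) / (T - b)))
      · intro m
        exact Continuous.aestronglyMeasurable (by fun_prop)
      · intro m
        filter_upwards with s hs
        rw [Set.uIoc_of_le hab.le] at hs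
        obtain ⟨hs1, hs2⟩ := hs
        have e1 : 0 ≤ b - s := by linarith
        have e2 : 0 ≤ s - a := by linarith
        rw [Real.norm_eq_abs, abs_mul, abs_div, abs_pow, abs_neg, abs_one, one_pow,
          abs_of_nonneg (by positivity : 0 ≤ (T - b) ^ (m + 1)),
          abs_of_nonneg (by positivity : 0 ≤ (b - s) ^ (m + k) * (s - a))]
        calc 1 / (T - b) ^ (m + 1) * ((b - s) ^ (m + k) * (s - a))
            ≤ 1 / (T - b) ^ (m + 1) * ((b - a) ^ (m + k) * (b - a)) := by gcongr
          _ = _ := by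
            rw [div_pow]
            field_simp
            try ring
      · filter_upwards with s hs
        exact hgeo.mul_right _
      · exact intervalIntegrable_const
      · filter_upwards with s hs
        rw [Set.uIoc_of_le hab.le] at hs
        obtain ⟨hs1, hs2⟩ := hs
        have e1 : 0 ≤ b - s := by linarith
        have hTs : 0 < T - s := by linarith
        have hlt : ‖-((b - s) / (T - b))‖ < 1 := by
          rw [norm_neg, Real.norm_eq_abs, abs_of_nonneg (by positivity), div_lt_one hD]
          linarith
        have hg := (hasSum_geometric_of_norm_lt_one hlt).mul_right
          ((b - s) ^ k * (s - a) / (T - b))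
        convert hg using 1
        · rfl
        · ext m
          rw [neg_pow ((b - s) / (T - b)), div_pow]
          field_simp
          try ring
        · have : 1 - -((b - s) / (T - b)) = (T - s) / (T - b) := by
            field_simp
            ring
          rw [this]
          field_simp
    rw [← key.tsum_eq, ← tsum_mul_left]
    congr 1
    ext m
    rw [intervalIntegral.integral_const_mul, beta_int, div_pow]
    push_cast
    field_simp
    try ring
end

section
/- Let E and F be real vector spaces and L : E -> F a linear map. Let t0 < t1 be real numbers, tau = t1 - t0, m = (t0 + t1)/2, and let V0, V1, W0, W12, W1 in E and f0, f12, f1 in F satisfy (V1 - V0)/tau + L V1 = f1, (W12 - W0)/(tau/2) + L W12 = f12, (W1 - W12)/(tau/2) + L W1 = f1, and additionally (V0 - V0')/... no additional relation at level 0 beyond U0 = 2*W0 - V0. Set U0 = 2*W0 - V0, U1 = 2*W1 - V1, Uhat(s) = U1 - (t1 - s)*(U1 - U0)/tau, fhat(s) = f1 - (t1 - s)*(f1 - f0)/tau, psi0 = L U0 - f0, psi1 = L U1 - f1, and Z = W12 - W0 - (V1 - V0)/2. Then for every function f : R -> F and every real s, f(s) - (U1 - U0)/tau - L(Uhat(s))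 = ( f(s) - fhat(s) ) + ( (f1 + f0)/2 - f12 ) + (m - s)*( psi1 - psi0 )/tau + L Z. -/
/-- Full residual representation for one step of the Richardson-extrapolated
backward Euler method (underlying Theorem 11 of the paper).  Everything is
placed in a single real vector space `E`. -/
theorem extrapolatedEuler_residual
    {E : Type*} [AddCommGroup E] [Module ℝ E] (L : E →ₗ[ℝ] E)
    (t0 t1 τ m : ℝ) (ht : t0 < t1) (hτ : τ = t1 - t0) (hm : m = (t0 + t1) / 2)
    (V0 V1 W0 W12 W1 f0 f12 f1 : E)
    (hV : τ⁻¹ • (V1 - V0) + L V1 = f1)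
    (hW12 : (τ / 2)⁻¹ • (W12 - W0) + L W12 = f12)
    (hW1 : (τ / 2)⁻¹ • (W1 - W12) + L W1 = f1)
    (U0 U1 : E) (hU0 : U0 = (2 : ℝ) • W0 - V0) (hU1 : U1 = (2 : ℝ) • W1 - V1)
    (Uhat fhat : ℝ → E) (ψ0 ψ1 Z : E)
    (hUhat : ∀ s, Uhat s = U1 - (t1 - s) • (τ⁻¹ • (U1 - U0)))
    (hfhat : ∀ s, fhat s = f1 - (t1 - s) • (τ⁻¹ • (f1 - f0)))
    (hψ0 : ψ0 = L U0 - f0) (hψ1 : ψ1 = L U1 - f1)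
    (hZ : Z = W12 - W0 - (1 / 2 : ℝ) • (V1 - V0)) :
    ∀ (f : ℝ → E) (s : ℝ),
      f s - τ⁻¹ • (U1 - U0) - L (Uhat s) =
        (f s - fhat s) + ((1 / 2 : ℝ) • (f1 + f0) - f12)
          + ((m - s) * τ⁻¹) • (ψ1 - ψ0) + L Z := by
  intro f s
  have hτ0 : τ ≠ 0 := by rw [hτ]; exact (sub_pos.mpr ht).ne'
  have hinv : (τ / 2)⁻¹ = 2 * τ⁻¹ := by field_simp
  have hc : (m - s) * τ⁻¹ = (t1 - s) * τ⁻¹ - 1 / 2 := by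
    field_simp
    rw [hm, hτ]; ring
  rw [hinv] at hW12 hW1
  have key : τ⁻¹ • (U1 - U0) = f12 - L W1 - L W12 + L V1 := by
    have e : τ⁻¹ • (U1 - U0) = (2 * τ⁻¹) • (W1 - W12) + (2 * τ⁻¹) • (W12 - W0)
        - τ⁻¹ • (V1 - V0) := by
      rw [hU0, hU1]; module
    rw [e, eq_sub_of_add_eq hW1, eq_sub_of_add_eq hW12, eq_sub_of_add_eq hV]
    module
  rw [key, hUhat, hfhat, hc, hψ0, hψ1, hZ, hU0, hU1]
  simp only [map_sub, map_smul]
  module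
end

section
/- Let E and F be real normed vector spaces and L : E -> F a linear map. Let t0 < t1 be real numbers, tau = t1 - t0, and let U0, U23, U1 in E and f0, f23, f1 in F satisfy the dG(1) relations U23 - U0 + (tau/12)*(5*L U23 - L U1) = (tau/12)*(5*f23 - f1) and U1 - U0 + (tau/4)*(3*L U23 + L U1) = (tau/4)*(3*f23 + f1). Define psi0 = f0 - L U0, psi23 = f23 - L U23, psi1 = f1 - L U1, zeta(x) = 3*(x - 1)*(x - 1/3), and the quadratic reconstruction Ubreve(t) = U1 - (3/2)*((t1 - t)/tau)*(U1 - U23) + ((U1 - 3*U23 + 2*U0)/2) * zeta((t - t0)/tau), and analogously fbreve(t) = f1 - (3/2)*((t1 - t)/tau)*(f1 - f23) + ((f1 - 3*f23 + 2*f0)/2) * zeta((t - t0)/tau). Then for every function f : R -> F and every real t, f(t) - Ubreve'(t) - L(Ubreve(t)) = ( f(t) - fbreve(t) ) + ( (psi1 - 3*psi23 + 2*psi0)/2 ) * zeta((t - t0)/tau), where Ubreve' denotes the derivative of the polynomial curve Ubreve. -/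
/-- Residual representation for one step of the dG(1) method (underlying
Theorem 10 of the paper).  Everything is placed in a single real normed
vector space `E`. -/
theorem dG1_residual
    {E : Type*} [NormedAddCommGroup E] [NormedSpace ℝ E] (L : E →ₗ[ℝ] E)
    (t0 t1 τ : ℝ) (ht : t0 < t1) (hτ : τ = t1 - t0)
    (U0 U23 U1 f0 f23 f1 : E)
    (hdG1 : U23 - U0 + (τ / 12) • ((5 : ℝ) • L U23 - L U1)
              = (τ / 12) • ((5 : ℝ) • f23 - f1))
    (hdG2 : U1 - U0 + (τ / 4) • ((3 : ℝ) • L U23 + L U1)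
              = (τ / 4) • ((3 : ℝ) • f23 + f1))
    (ψ0 ψ23 ψ1 : E)
    (hψ0 : ψ0 = f0 - L U0) (hψ23 : ψ23 = f23 - L U23) (hψ1 : ψ1 = f1 - L U1)
    (ζ : ℝ → ℝ) (hζ : ∀ x, ζ x = 3 * (x - 1) * (x - 1 / 3))
    (Ubreve fbreve : ℝ → E)
    (hUbreve : ∀ t, Ubreve t =
        U1 - ((3 / 2) * ((t1 - t) / τ)) • (U1 - U23)
          + ζ ((t - t0) / τ) • ((1 / 2 : ℝ) • (U1 - (3 : ℝ) • U23 + (2 : ℝ) • U0)))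
    (hfbreve : ∀ t, fbreve t =
        f1 - ((3 / 2) * ((t1 - t) / τ)) • (f1 - f23)
          + ζ ((t - t0) / τ) • ((1 / 2 : ℝ) • (f1 - (3 : ℝ) • f23 + (2 : ℝ) • f0))) :
    ∀ (f : ℝ → E) (t : ℝ),
      f t - deriv Ubreve t - L (Ubreve t) =
        (f t - fbreve t)
          + ζ ((t - t0) / τ) • ((1 / 2 : ℝ) • (ψ1 - (3 : ℝ) • ψ23 + (2 : ℝ) • ψ0)) := by
  intro f t
  have hτ0 : τ ≠ 0 := by rw [hτ]; exact (sub_pos.mpr ht).ne'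
  have e1 : f1 = ψ1 + L U1 := by rw [hψ1]; abel
  have e23 : f23 = ψ23 + L U23 := by rw [hψ23]; abel
  have e0 : f0 = ψ0 + L U0 := by rw [hψ0]; abel
  have hA : U1 - U23 = (τ / 3) • (ψ23 + ψ1) := by
    rw [hψ1, hψ23]
    linear_combination (norm := module) hdG2 - hdG1
  have hB : (1 / 2 : ℝ) • (U1 - (3 : ℝ) • U23 + (2 : ℝ) • U0) = (τ / 4) • (ψ1 - ψ23) := by
    rw [hψ1, hψ23]
    linear_combination (norm := module) (1 / 2 : ℝ) • hdG2 - (3 / 2 : ℝ) • hdG1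
  have hd : HasDerivAt Ubreve
      (-((3 / 2) * (-1 / τ)) • (U1 - U23)
        + ((6 * ((t - t0) / τ) - 4) / τ) •
          ((1 / 2 : ℝ) • (U1 - (3 : ℝ) • U23 + (2 : ℝ) • U0))) t := by
    have h1 : HasDerivAt (fun t : ℝ => (3 / 2) * ((t1 - t) / τ)) ((3 / 2) * (-1 / τ)) t :=
      (((hasDerivAt_id t).const_sub t1).div_const τ).const_mul (3 / 2)
    have hx : HasDerivAt (fun t : ℝ => (t - t0) / τ) (1 / τ) t :=
      ((hasDerivAt_id t).sub_const t0).div_const τ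
    have h2 : HasDerivAt (fun t : ℝ => ζ ((t - t0) / τ)) ((6 * ((t - t0) / τ) - 4) / τ) t := by
      have h := ((hx.sub_const 1).const_mul 3).mul (hx.sub_const (1 / 3))
      refine (h.congr_of_eventuallyEq (Filter.Eventually.of_forall fun s => ?_)).congr_deriv ?_
      · simp [hζ]
      · ring
    have h := ((h1.smul_const (U1 - U23)).const_sub U1).add
      (h2.smul_const ((1 / 2 : ℝ) • (U1 - (3 : ℝ) • U23 + (2 : ℝ) • U0)))
    refine (h.congr_of_eventuallyEq (Filter.Eventually.of_forall fun s => ?_)).congr_deriv ?_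
    · simp only [hUbreve, Pi.add_apply]
    · rw [neg_smul]
  rw [hd.deriv, hA, hB, hUbreve, hfbreve, e1, e23, e0]
  simp only [map_add, map_sub, map_smul]
  have ht1 : t1 = t0 + τ := by rw [hτ]; ring
  rw [ht1]
  match_scalars <;> field_simp <;> ring
end

section
/- Let E and F be real normed vector spaces and L : E -> F a linear map. Let t0 < t1 be real numbers, tau = t1 - t0, and let U0, U23, U1 in E and f23, f1 in F satisfy the dG(1) relations U23 - U0 + (tau/12)*(5*L U23 - L U1) = (tau/12)*(5*f23 - f1) and U1 - U0 + (tau/4)*(3*L U23 + L U1) = (tau/4)*(3*f23 + f1). Define psi23 = f23 - L U23, psi1 = f1 - L U1, zeta(x) = 3*(x - 1)*(x - 1/3), and Ubreve(t) = U1 - (3/2)*((t1 - t)/tau)*(U1 - U23) + ((U1 - 3*U23 + 2*U0)/2) * zeta((t - t0)/tau). Then for every real t, the derivative of Ubreve satisfies Ubreve'(t) = psi1 - (3/2)*((t1 - t)/tau)*(psi1 - psi23); that is, Ubreve' is the linear interpolant of psi = f - L U through the values psi23 at t1 - (2/3)*tau and psi1 at t1. -/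
/-- Key intermediate identity of the dG(1) a posteriori analysis: the
derivative of the continuous piecewise quadratic reconstruction `Ubreve`
coincides with the linear interpolant of `ψ = f - L U` through the two Radau
nodes.  Everything is placed in a single real normed vector space `E`. -/
theorem dG1_reconstruction_derivative
    {E : Type*} [NormedAddCommGroup E] [NormedSpace ℝ E] (L : E →ₗ[ℝ] E)
    (t0 t1 τ : ℝ) (ht : t0 < t1) (hτ : τ = t1 - t0)
    (U0 U23 U1 f23 f1 : E)
    (hdG1 : U23 - U0 + (τ / 12) • ((5 : ℝ) • L U23 - L U1)
              = (τ / 12) • ((5 : ℝ) • f23 - f1))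
    (hdG2 : U1 - U0 + (τ / 4) • ((3 : ℝ) • L U23 + L U1)
              = (τ / 4) • ((3 : ℝ) • f23 + f1))
    (ψ23 ψ1 : E)
    (hψ23 : ψ23 = f23 - L U23) (hψ1 : ψ1 = f1 - L U1)
    (ζ : ℝ → ℝ) (hζ : ∀ x, ζ x = 3 * (x - 1) * (x - 1 / 3))
    (Ubreve : ℝ → E)
    (hUbreve : ∀ t, Ubreve t =
        U1 - ((3 / 2) * ((t1 - t) / τ)) • (U1 - U23)
          + ζ ((t - t0) / τ) • ((1 / 2 : ℝ) • (U1 - (3 : ℝ) • U23 + (2 : ℝ) • U0))) :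
    ∀ t : ℝ,
      HasDerivAt Ubreve (ψ1 - ((3 / 2) * ((t1 - t) / τ)) • (ψ1 - ψ23)) t := by
  intro t
  have hτ0 : τ ≠ 0 := by rw [hτ]; exact (sub_pos.mpr ht).ne'
  have e1 : U23 = U0 + (τ / 12) • ((5 : ℝ) • ψ23 - ψ1) := by
    have h : U23 = U0 + ((τ / 12) • ((5 : ℝ) • f23 - f1)
        - (τ / 12) • ((5 : ℝ) • L U23 - L U1)) := by
      rw [← hdG1]; abel
    rw [hψ23, hψ1]
    refine h.trans ?_
    module
  have e2 : U1 = U0 + (τ / 4) • ((3 : ℝ) • ψ23 + ψ1) := by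
    have h : U1 = U0 + ((τ / 4) • ((3 : ℝ) • f23 + f1)
        - (τ / 4) • ((3 : ℝ) • L U23 + L U1)) := by
      rw [← hdG2]; abel
    rw [hψ23, hψ1]
    refine h.trans ?_
    module
  have d1 : U1 - U23 = (τ / 3) • (ψ23 + ψ1) := by
    rw [e1, e2]; module
  have d2 : (1 / 2 : ℝ) • (U1 - (3 : ℝ) • U23 + (2 : ℝ) • U0) = (τ / 4) • (ψ1 - ψ23) := by
    rw [e1, e2]; module
  have hU : Ubreve = fun t => U1 - ((3 / 2) * ((t1 - t) / τ)) • ((τ / 3) • (ψ23 + ψ1))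
      + (3 * ((t - t0) / τ - 1) * ((t - t0) / τ - 1 / 3)) • ((τ / 4) • (ψ1 - ψ23)) := by
    funext s
    rw [hUbreve, hζ, d1, d2]
  rw [hU]
  have ha : HasDerivAt (fun t : ℝ => (3 / 2) * ((t1 - t) / τ)) ((3 / 2) * (-1 / τ)) t :=
    (((hasDerivAt_id t).const_sub t1).div_const τ).const_mul _
  have hx : HasDerivAt (fun t : ℝ => (t - t0) / τ) (1 / τ) t :=
    ((hasDerivAt_id t).sub_const t0).div_const τ
  have hb := ((hx.sub_const 1).const_mul 3).mul (hx.sub_const (1 / 3))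
  have h := ((ha.smul_const ((τ / 3) • (ψ23 + ψ1))).const_sub U1).add
    (hb.smul_const ((τ / 4) • (ψ1 - ψ23)))
  refine h.congr_deriv ?_
  have ht1 : t1 = t0 + τ := by rw [hτ]; ring
  rw [ht1]
  match_scalars <;> field_simp <;> ring
end

section
/- Let E and F be real vector spaces and L : E -> F a linear map. Let t0 < t1 be real numbers with step tau1 = t1 - t0, let tau0 > 0 be the previous step, and set m = (t0 + t1)/2. Let U0, U1 in E, f0, f1 in F, and auxiliary vectors d in E (the previous first difference quotient) and e in E (the previous second difference quotient) satisfy the BDF-2 relation D + tau1 * D2 + L U1 = f1 and the previous-level relation d + tau0 * e + L U0 = f0, where D = (U1 - U0)/tau1 and D2 = (D - d)/(tau1 + tau0). Define Uhat(s) = U1 - (t1 - s)*(U1 - U0)/tau1 and fhat(s) = f1 - (t1 - s)*(f1 - f0)/tau1. Then for every function f : R -> F and every real s, f(s) - D - L(Uhat(s)) = ( f(s) - fhat(s) ) + 2*(s - m)*D2 + (s - t1)*(tau0/tau1)*( D2 - e ). -/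
/-- Residual representation for one interior step of the BDF-2 method
(underlying Theorem 13 of the paper).  Everything is placed in a single real
vector space `E`. -/
theorem BDF2_residual
    {E : Type*} [AddCommGroup E] [Module ℝ E] (L : E →ₗ[ℝ] E)
    (t0 t1 τ1 τ0 m : ℝ) (ht : t0 < t1) (hτ1 : τ1 = t1 - t0) (hτ0 : 0 < τ0)
    (hm : m = (t0 + t1) / 2)
    (U0 U1 f0 f1 d e : E)
    (D D2 : E)
    (hD : D = τ1⁻¹ • (U1 - U0))
    (hD2 : D2 = (τ1 + τ0)⁻¹ • (D - d))
    (hscheme : D + τ1 • D2 + L U1 = f1)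
    (hprev : d + τ0 • e + L U0 = f0)
    (Uhat fhat : ℝ → E)
    (hUhat : ∀ s, Uhat s = U1 - (t1 - s) • (τ1⁻¹ • (U1 - U0)))
    (hfhat : ∀ s, fhat s = f1 - (t1 - s) • (τ1⁻¹ • (f1 - f0))) :
    ∀ (f : ℝ → E) (s : ℝ),
      f s - D - L (Uhat s) =
        (f s - fhat s) + (2 * (s - m)) • D2
          + ((s - t1) * (τ0 / τ1)) • (D2 - e) := by
  intro f s
  have h1 : τ1 ≠ 0 := by rw [hτ1]; exact (sub_pos.mpr ht).ne'
  have h2 : τ1 + τ0 ≠ 0 := by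
    have : 0 < τ1 := by rw [hτ1]; exact sub_pos.mpr ht
    positivity
  have hd : d = D - (τ1 + τ0) • D2 := by
    rw [hD2, smul_inv_smul₀ h2]; abel
  have ht0 : t0 = t1 - τ1 := by rw [hτ1]; ring
  rw [hUhat, hfhat, ← hscheme, ← hprev, hd, hm, ht0]
  simp only [map_sub, map_smul]
  clear hD hD2 hscheme hprev hUhat hfhat hd hm ht0 hτ1
  match_scalars <;> field_simp <;> ring
end
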